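/- Let V be a pseudo-Euclidean space with a nontrivial orthogonal decomposition V = V₁ ⊕ V₂ into nonzero nondegenerate subspaces. Then for every algebraic curvature tensor R ∈ ℛ(so(V₁) ⊕ so(V₂) ⊕ ℝ·id_V) there exist unique R₁ ∈ ℛ(so(V₁)) and R₂ ∈ ℛ(so(V₂)) (each extended by zero, i.e. R₁ vanishes on all bivectors involving V₂ and R₂ on all bivectors involving V₁) and a unique linear map Z : V₂ → V₁ such that R = R₁ + R₂ + R₃, where R₃ vanishes on Λ²V₁ and on Λ²V₂ and R₃(X₁,X₂) = Z(X₂)∧X₁ + Z*(X₁)∧X₂ + (Z(X₂),X₁)·id_V for X₁ ∈ V₁, X₂ ∈ V₂, with Z* : V₁ → V₂ the adjoint of Z with respect to the forms. Conversely every such sum R₁ + R₂ + R₃ lies in ℛ(so(V₁) ⊕ so(V₂) ⊕ ℝ·id_V); consequently ℛ(so(V₁) ⊕ so(V₂) ⊕ ℝ·id_V) ≅ ℛ(so(V₁)) ⊕ ℛ(so(V₂)) ⊕ V₁⊗V₂. -/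

import Mathlib

open Module

noncomputable section

namespace Weyl

variable {V : Type*} [AddCommGroup V] [Module ℝ V]

/-- The endomorphism `X ∧ Y : Z ↦ B(X,Z)•Y − B(Y,Z)•X`. -/
def wedge (B : LinearMap.BilinForm ℝ V) (X Y : V) : Module.End ℝ V where
  toFun Z := B X Z • Y - B Y Z • X
  map_add' z z' := by simp only [map_add, add_smul]; abel
  map_smul' c z := by simp only [map_smul, smul_eq_mul, RingHom.id_apply, mul_smul, smul_sub]

/-- The Lie algebra `so(B)` of endomorphisms skew-symmetric with respect to `B`. -/
def soSet (B : LinearMap.BilinForm ℝ V) : Set (Module.End ℝ V) :=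
  {A | ∀ x y, B (A x) y + B x (A y) = 0}

/-- The conformal Lie algebra `co(B) = ℝ·id ⊕ so(B)`. -/
def coSet (B : LinearMap.BilinForm ℝ V) : Set (Module.End ℝ V) :=
  {F | ∃ c : ℝ, ∃ S ∈ soSet B, F = c • (1 : Module.End ℝ V) + S}

/-- The first prolongation `g^{(1)}` of a set of endomorphisms:
linear maps `φ : V → g` with `φ(X)Y = φ(Y)X`. -/
def firstProlong (g : Set (Module.End ℝ V)) : Set (V →ₗ[ℝ] Module.End ℝ V) :=
  {φ | (∀ x, φ x ∈ g) ∧ ∀ x y, φ x y = φ y x}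

/-- `R` is an algebraic curvature tensor of type `g` (a linear map on `Λ²V`,
encoded as an antisymmetric bilinear map, with values in `g`, satisfying the
Bianchi identity). -/
def IsCurv (g : Set (Module.End ℝ V)) (R : V →ₗ[ℝ] V →ₗ[ℝ] Module.End ℝ V) : Prop :=
  (∀ x y, R x y = - R y x) ∧ (∀ x y, R x y ∈ g) ∧
    ∀ x y z, R x y z + R y z x + R z x y = 0

/-- `L(ℛ(g))`: the span of all values of algebraic curvature tensors of type `g`. -/
def curvSpan (g : Set (Module.End ℝ V)) : Submodule ℝ (Module.End ℝ V) :=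
  Submodule.span ℝ {F | ∃ R, IsCurv g R ∧ ∃ x y, F = R x y}

/-- `g` is a Berger algebra: `L(ℛ(g)) = g`. -/
def IsBerger (g : Set (Module.End ℝ V)) : Prop :=
  (curvSpan g : Set (Module.End ℝ V)) = g

/-- `g` is (the underlying set of) a Lie subalgebra of `gl(V)`. -/
def IsLieSub (g : Set (Module.End ℝ V)) : Prop :=
  (0 : Module.End ℝ V) ∈ g ∧ (∀ F ∈ g, ∀ F' ∈ g, F + F' ∈ g) ∧
    (∀ (c : ℝ), ∀ F ∈ g, c • F ∈ g) ∧ ∀ F ∈ g, ∀ F' ∈ g, F * F' - F' * F ∈ g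

/-- The subspace `W` is invariant under every element of `g`. -/
def Invariant (g : Set (Module.End ℝ V)) (W : Submodule ℝ V) : Prop :=
  ∀ F ∈ g, ∀ x ∈ W, F x ∈ W

/-- The restriction of `B` to `W` is nondegenerate. -/
def IsNondegOn (B : LinearMap.BilinForm ℝ V) (W : Submodule ℝ V) : Prop :=
  ∀ x ∈ W, (∀ y ∈ W, B x y = 0) → x = 0

/-- Weak irreducibility: no proper nonzero invariant nondegenerate subspace. -/
def WeaklyIrred (B : LinearMap.BilinForm ℝ V) (g : Set (Module.End ℝ V)) : Prop :=
  ∀ W : Submodule ℝ V, Invariant g W → IsNondegOn B W → W = ⊥ ∨ W = ⊤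

/-- Irreducibility: no proper nonzero invariant subspace. -/
def Irred (g : Set (Module.End ℝ V)) : Prop :=
  ∀ W : Submodule ℝ V, Invariant g W → W = ⊥ ∨ W = ⊤

/-- `so(W)` regarded as a subalgebra of `so(V)`: skew-symmetric endomorphisms
preserving `W` and acting by zero on the complementary summand `W'`. -/
def soPart (B : LinearMap.BilinForm ℝ V) (W W' : Submodule ℝ V) :
    Set (Module.End ℝ V) :=
  {A | A ∈ soSet B ∧ (∀ x ∈ W, A x ∈ W) ∧ ∀ y ∈ W', A y = 0}

/-- The decomposition `R = R₁ + R₂ + R₃` of an algebraic curvature tensor of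
type `so(V₁) ⊕ so(V₂) ⊕ ℝ·id`: `R₁ ∈ ℛ(so(V₁))` and `R₂ ∈ ℛ(so(V₂))` extended
by zero, `Z : V₂ → V₁` with adjoint `W = Z*`, and `R₃` vanishes on `Λ²V₁` and
`Λ²V₂` and is given by `R₃(X₁,X₂) = Z(X₂)∧X₁ + Z*(X₁)∧X₂ + (Z(X₂),X₁)·id` for
`X₁ ∈ V₁`, `X₂ ∈ V₂`. -/
def Decomp (B : LinearMap.BilinForm ℝ V) (V₁ V₂ : Submodule ℝ V)
    (R R₁ R₂ : V →ₗ[ℝ] V →ₗ[ℝ] Module.End ℝ V) (Z W : Module.End ℝ V) : Prop :=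
  IsCurv (soPart B V₁ V₂) R₁ ∧
  (∀ x y : V, x ∈ V₂ ∨ y ∈ V₂ → R₁ x y = 0) ∧
  IsCurv (soPart B V₂ V₁) R₂ ∧
  (∀ x y : V, x ∈ V₁ ∨ y ∈ V₁ → R₂ x y = 0) ∧
  (∀ y ∈ V₂, Z y ∈ V₁) ∧ (∀ x ∈ V₁, Z x = 0) ∧
  (∀ x ∈ V₁, W x ∈ V₂) ∧ (∀ y ∈ V₂, W y = 0) ∧
  (∀ x y, B (Z x) y = B x (W y)) ∧
  (∀ x y, R x y = - R y x) ∧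
  (∀ x ∈ V₁, ∀ y ∈ V₁, R x y = R₁ x y + R₂ x y) ∧
  (∀ x ∈ V₂, ∀ y ∈ V₂, R x y = R₁ x y + R₂ x y) ∧
  (∀ x ∈ V₁, ∀ y ∈ V₂,
    R x y = R₁ x y + R₂ x y + wedge B (Z y) x + wedge B (W x) y +
      (B (Z y) x) • (1 : Module.End ℝ V))

/-!
For `R` of type `so(V₁) ⊕ so(V₂) ⊕ ℝ·id`, all values of `R` preserve `V₁` and `V₂`, so the Bianchi
identity forces `R(x, y)` to vanish on `V₂` for `x, y ∈ V₁`.  Since `V₂` contains a nonnull vector,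
`R(x, y)` then has no homothetic part and lies in `so(V₁)`; symmetrically for `V₂`.  For `y ∈ V₂`,
the vanishing of `R(x, u)y` turns the Bianchi identity into the symmetry of `R(x, y)u` in
`x, u ∈ V₁`: thus `x ↦ R(x, y)|V₁` lies in the first prolongation of `co(V₁)`, which a Koszul
computation identifies with `V₁` through `x ↦ z ∧ x + (z, x)·id`.  The resulting `z = Z(y)`, and its
counterpart for `V₂`, are adjoint to each other because they both compute the homothetic part of
`R(x, y)`.
-/

section Endomorphisms

variable {B : LinearMap.BilinForm ℝ V} {U V₁ V₂ : Submodule ℝ V}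

lemma wedge_apply (B : LinearMap.BilinForm ℝ V) (x y z : V) :
    wedge B x y z = B x z • y - B y z • x :=
  rfl

lemma wedge_neg_left (B : LinearMap.BilinForm ℝ V) (x y : V) :
    wedge B (-x) y = -wedge B x y := by
  ext z
  simp only [wedge_apply, map_neg, LinearMap.neg_apply]
  module

lemma wedge_mem_soSet (hB : B.IsSymm) (x y : V) : wedge B x y ∈ soSet B := by
  intro u w
  simp only [wedge_apply, map_sub, map_smul, LinearMap.sub_apply, LinearMap.smul_apply,
    smul_eq_mul]
  rw [hB.eq u x, hB.eq u y]
  ring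

lemma apply_self_eq_zero_of_mem_soSet (hB : B.IsSymm) {A : Module.End ℝ V} (hA : A ∈ soSet B)
    (u : V) : B (A u) u = 0 := by
  have h := hA u u
  rw [hB.eq u (A u)] at h
  linarith

lemma exists_apply_self_of_mem_coSet (hB : B.IsSymm) {F : Module.End ℝ V} (hF : F ∈ coSet B) :
    ∃ c : ℝ, ∀ u, B (F u) u = c * B u u := by
  obtain ⟨c, S, hS, rfl⟩ := hF
  exact ⟨c, fun u => by simp [apply_self_eq_zero_of_mem_soSet hB hS u]⟩

lemma mem_soSet_of_apply_eq_zero (hB : B.IsSymm) {F : Module.End ℝ V} (hF : F ∈ coSet B) {e : V}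
    (he : B e e ≠ 0) (hFe : F e = 0) : F ∈ soSet B := by
  obtain ⟨c, S, hS, rfl⟩ := hF
  have hSe : S e = -(c • e) := eq_neg_of_add_eq_zero_right hFe
  have hc : c = 0 := by simpa [hSe, he] using apply_self_eq_zero_of_mem_soSet hB hS e
  simpa [hc] using hS

lemma restrict_mem_coSet {F : Module.End ℝ V} (hF : F ∈ coSet B) (hU : ∀ x ∈ U, F x ∈ U) :
    F.restrict hU ∈ coSet (B.restrict U) := by
  obtain ⟨c, S, hS, rfl⟩ := hF
  have hSU : ∀ x ∈ U, S x ∈ U := fun x hx =>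
    (U.add_mem_iff_right (U.smul_mem c hx)).1 (hU x hx)
  exact ⟨c, S.restrict hSU, fun x y => hS x y, rfl⟩

lemma IsNondegOn.separatingLeft_restrict (hU : IsNondegOn B U) :
    (B.restrict U).SeparatingLeft :=
  fun x hx => Subtype.ext (hU x x.2 fun y hy => hx ⟨y, hy⟩)

lemma IsNondegOn.exists_apply_self_ne_zero (hB : B.IsSymm) (hU : IsNondegOn B U) (hU' : U ≠ ⊥) :
    ∃ e ∈ U, B e e ≠ 0 := by
  obtain ⟨x, hx, hx0⟩ := U.ne_bot_iff.1 hU'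
  have hBU : B.restrict U ≠ 0 := fun h =>
    hx0 (hU x hx fun y hy => LinearMap.congr_fun₂ h ⟨x, hx⟩ ⟨y, hy⟩)
  obtain ⟨e, he⟩ := LinearMap.BilinForm.exists_bilinForm_self_ne_zero hBU
    ⟨fun x y => hB.eq x y⟩
  exact ⟨e, e.2, he⟩

end Endomorphisms

section FirstProlongation

variable {B : LinearMap.BilinForm ℝ V}

-- As for the Koszul formula, permute `x, u, w` cyclically, using symmetry in the first two slots
-- and skewness up to scale in the last two.
lemma koszul_of_mem_firstProlong (hB : B.IsSymm) {φ : V →ₗ[ℝ] Module.End ℝ V}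
    (hφ : φ ∈ firstProlong (coSet B)) :
    ∃ c : V → ℝ, ∀ x u w, B (φ x u) w = c x * B u w + c u * B x w - c w * B x u := by
  choose c S hS hφS using hφ.1
  have conformal : ∀ x u w, B (φ x u) w + B (φ x w) u = 2 * c x * B u w := by
    intro x u w
    have h := hS x u w
    simp only [hφS, LinearMap.add_apply, LinearMap.smul_apply, Module.End.one_apply, map_add,
      map_smul, smul_eq_mul]
    rw [hB.eq w u, hB.eq (S x w) u]
    linarith
  refine ⟨c, fun x u w => ?_⟩
  have hx := conformal x u w
  have hu := conformal u w x
  have hw := conformal w x u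
  rw [hφ.2 u x, hB.eq w x] at hu
  rw [hφ.2 w x, hφ.2 w u] at hw
  linarith

lemma exists_firstProlong_coSet_eq (hB : B.IsSymm) (hnd : B.SeparatingLeft) {e : V}
    (he : B e e ≠ 0) :
    ∃ ζ : (V →ₗ[ℝ] Module.End ℝ V) →ₗ[ℝ] V, ∀ φ ∈ firstProlong (coSet B), ∀ x,
      φ x = wedge B (ζ φ) x + B (ζ φ) x • 1 := by
  let ev : (V →ₗ[ℝ] Module.End ℝ V) →ₗ[ℝ] V := LinearMap.applyₗ e ∘ₗ LinearMap.applyₗ e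
  -- Solve `φ e e = 2 (z, e) e - (e, e) z` for `z`.
  refine ⟨(B e e)⁻¹ • ((2 * (B e e)⁻¹) • (B e ∘ₗ ev).smulRight e - ev), fun φ hφ x => ?_⟩
  set z := ((B e e)⁻¹ • ((2 * (B e e)⁻¹) • (B e ∘ₗ ev).smulRight e - ev)) φ with hz
  obtain ⟨c, hc⟩ := koszul_of_mem_firstProlong hB hφ
  have hzc : ∀ w, B z w = c w := by
    intro w
    simp only [hz, ev, LinearMap.smul_apply, LinearMap.sub_apply, LinearMap.smulRight_apply,
      LinearMap.comp_apply, LinearMap.applyₗ_apply_apply, map_smul, map_sub, smul_eq_mul,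
      hB.eq e (φ e e), hc]
    field_simp
    ring
  ext u
  refine sub_eq_zero.1 (hnd _ fun w => ?_)
  simp only [wedge_apply, LinearMap.add_apply, LinearMap.smul_apply, Module.End.one_apply, map_sub,
    map_add, map_smul, LinearMap.sub_apply, smul_eq_mul, hc, hzc]
  ring

end FirstProlongation

section ConformalSum

variable {B : LinearMap.BilinForm ℝ V} {V₁ V₂ : Submodule ℝ V}

lemma ortho_symm (hB : B.IsSymm) (horth : ∀ x ∈ V₁, ∀ y ∈ V₂, B x y = 0) :
    ∀ y ∈ V₂, ∀ x ∈ V₁, B y x = 0 :=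
  fun y hy x hx => (hB.eq y x).trans (horth x hx y hy)

lemma wedge_mem_soPart (hB : B.IsSymm) (horth : ∀ x ∈ V₁, ∀ y ∈ V₂, B x y = 0) {x y : V}
    (hx : x ∈ V₁) (hy : y ∈ V₁) : wedge B x y ∈ soPart B V₁ V₂ :=
  ⟨wedge_mem_soSet hB x y, fun _ _ => V₁.sub_mem (V₁.smul_mem _ hy) (V₁.smul_mem _ hx),
    fun z hz => by simp [wedge_apply, horth x hx z hz, horth y hy z hz]⟩

/-- `so(W) ⊆ so(V)` as a linear subspace of `gl(V)`. -/
def soPartSubmodule (B : LinearMap.BilinForm ℝ V) (W W' : Submodule ℝ V) :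
    Submodule ℝ (Module.End ℝ V) where
  carrier := soPart B W W'
  zero_mem' := ⟨fun x y => by simp, fun x _ => by simp, fun y _ => rfl⟩
  add_mem' {A A'} hA hA' :=
    ⟨fun x y => by
      have h := hA.1 x y
      have h' := hA'.1 x y
      simp only [LinearMap.add_apply, map_add]
      linarith,
    fun x hx => W.add_mem (hA.2.1 x hx) (hA'.2.1 x hx),
    fun y hy => by simp [hA.2.2 y hy, hA'.2.2 y hy]⟩
  smul_mem' c A hA :=
    ⟨fun x y => by simp [← mul_add, hA.1 x y], fun x hx => W.smul_mem c (hA.2.1 x hx),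
    fun y hy => by simp [hA.2.2 y hy]⟩

/-- The algebra `so(V₁) ⊕ so(V₂) ⊕ ℝ·id`, as a linear subspace of `gl(V)`. -/
def conformalSum (B : LinearMap.BilinForm ℝ V) (V₁ V₂ : Submodule ℝ V) :
    Submodule ℝ (Module.End ℝ V) where
  carrier := {F | ∃ c : ℝ, ∃ A₁ ∈ soPart B V₁ V₂, ∃ A₂ ∈ soPart B V₂ V₁,
    F = c • (1 : Module.End ℝ V) + A₁ + A₂}
  zero_mem' := ⟨0, 0, (soPartSubmodule B V₁ V₂).zero_mem, 0, (soPartSubmodule B V₂ V₁).zero_mem,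
    by simp⟩
  add_mem' := by
    rintro _ _ ⟨c, A₁, h₁, A₂, h₂, rfl⟩ ⟨c', A₁', h₁', A₂', h₂', rfl⟩
    exact ⟨c + c', _, (soPartSubmodule B V₁ V₂).add_mem h₁ h₁', _,
      (soPartSubmodule B V₂ V₁).add_mem h₂ h₂', by module⟩
  smul_mem' := by
    rintro t _ ⟨c, A₁, h₁, A₂, h₂, rfl⟩
    exact ⟨t * c, _, (soPartSubmodule B V₁ V₂).smul_mem t h₁, _,
      (soPartSubmodule B V₂ V₁).smul_mem t h₂, by module⟩

lemma conformalSum_comm (B : LinearMap.BilinForm ℝ V) (V₁ V₂ : Submodule ℝ V) :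
    conformalSum B V₁ V₂ = conformalSum B V₂ V₁ := by
  ext F
  constructor <;> rintro ⟨c, A₁, h₁, A₂, h₂, rfl⟩ <;>
    exact ⟨c, A₂, h₂, A₁, h₁, add_right_comm _ _ _⟩

lemma soPart_subset_conformalSum : soPart B V₁ V₂ ⊆ conformalSum B V₁ V₂ :=
  fun A hA => ⟨0, A, hA, 0, (soPartSubmodule B V₂ V₁).zero_mem, by simp⟩

lemma conformalSum_subset_coSet : (conformalSum B V₁ V₂ : Set (Module.End ℝ V)) ⊆ coSet B := by
  rintro _ ⟨c, A₁, h₁, A₂, h₂, rfl⟩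
  refine ⟨c, A₁ + A₂, fun x y => ?_, add_assoc _ _ _⟩
  have h₁' := h₁.1 x y
  have h₂' := h₂.1 x y
  simp only [LinearMap.add_apply, map_add]
  linarith

lemma invariant_conformalSum_left (B : LinearMap.BilinForm ℝ V) (V₁ V₂ : Submodule ℝ V) :
    Invariant (conformalSum B V₁ V₂) V₁ := by
  rintro _ ⟨c, A₁, h₁, A₂, h₂, rfl⟩ x hx
  simpa [h₂.2.2 x hx] using V₁.add_mem (V₁.smul_mem c hx) (h₁.2.1 x hx)

lemma invariant_conformalSum_right (B : LinearMap.BilinForm ℝ V) (V₁ V₂ : Submodule ℝ V) :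
    Invariant (conformalSum B V₁ V₂) V₂ :=
  conformalSum_comm B V₁ V₂ ▸ invariant_conformalSum_left B V₂ V₁

/-- The value `R₃(x, y) = Z(y) ∧ x + W(x) ∧ y + (Z(y), x)·id` for `x ∈ V₁` and `y ∈ V₂`, where `W`
stands for `Z*`; only these values are meaningful. -/
def mixedCurv (B : LinearMap.BilinForm ℝ V) (Z W : Module.End ℝ V) (x y : V) : Module.End ℝ V :=
  wedge B (Z y) x + wedge B (W x) y + B (Z y) x • 1

lemma mixedCurv_mem_conformalSum (hB : B.IsSymm) (horth : ∀ x ∈ V₁, ∀ y ∈ V₂, B x y = 0)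
    {Z W : Module.End ℝ V} {x y : V} (hx : x ∈ V₁) (hy : y ∈ V₂) (hZ : Z y ∈ V₁) (hW : W x ∈ V₂) :
    mixedCurv B Z W x y ∈ conformalSum B V₁ V₂ :=
  ⟨B (Z y) x, _, wedge_mem_soPart hB horth hZ hx, _,
    wedge_mem_soPart hB (ortho_symm hB horth) hW hy, by rw [mixedCurv]; abel⟩

lemma mixedCurv_apply_left (hB : B.IsSymm) (horth : ∀ x ∈ V₁, ∀ y ∈ V₂, B x y = 0)
    {Z W : Module.End ℝ V} {x y u : V} (hy : y ∈ V₂) (hW : W x ∈ V₂) (hu : u ∈ V₁) :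
    mixedCurv B Z W x y u = wedge B (Z y) x u + B (Z y) x • u := by
  have h : wedge B (W x) y u = 0 := (wedge_mem_soPart hB (ortho_symm hB horth) hW hy).2.2 u hu
  simp [mixedCurv, h]

lemma mixedCurv_apply_right (hB : B.IsSymm) (horth : ∀ x ∈ V₁, ∀ y ∈ V₂, B x y = 0)
    {Z W : Module.End ℝ V} {x y v : V} (hx : x ∈ V₁) (hZ : Z y ∈ V₁) (hv : v ∈ V₂) :
    mixedCurv B Z W x y v = wedge B (W x) y v + B (Z y) x • v := by
  have h : wedge B (Z y) x v = 0 := (wedge_mem_soPart hB horth hZ hx).2.2 v hv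
  simp [mixedCurv, h]

lemma mixedCurv_apply_self (hB : B.IsSymm) (Z W : Module.End ℝ V) (x y u : V) :
    B (mixedCurv B Z W x y u) u = B (Z y) x * B u u := by
  simp [mixedCurv, apply_self_eq_zero_of_mem_soSet hB (wedge_mem_soSet hB _ _)]

end ConformalSum

section Curvature

variable {V₁ V₂ : Submodule ℝ V} {R : V →ₗ[ℝ] V →ₗ[ℝ] Module.End ℝ V}

lemma forall_apply_mem_of_codisjoint (hV : Codisjoint V₁ V₂) (hanti : ∀ x y, R x y = -R y x)
    {g : Submodule ℝ (Module.End ℝ V)} (h₁₁ : ∀ x ∈ V₁, ∀ y ∈ V₁, R x y ∈ g)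
    (h₁₂ : ∀ x ∈ V₁, ∀ y ∈ V₂, R x y ∈ g) (h₂₂ : ∀ x ∈ V₂, ∀ y ∈ V₂, R x y ∈ g) (x y : V) :
    R x y ∈ g := by
  obtain ⟨x₁, x₂, hx₁, hx₂, rfl⟩ := Submodule.codisjoint_iff_exists_add_eq.1 hV x
  obtain ⟨y₁, y₂, hy₁, hy₂, rfl⟩ := Submodule.codisjoint_iff_exists_add_eq.1 hV y
  have h₂₁ : R x₂ y₁ ∈ g := hanti x₂ y₁ ▸ g.neg_mem (h₁₂ y₁ hy₁ x₂ hx₂)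
  simpa only [map_add, LinearMap.add_apply] using
    g.add_mem (g.add_mem (h₁₁ x₁ hx₁ y₁ hy₁) h₂₁)
      (g.add_mem (h₁₂ x₁ hx₁ y₂ hy₂) (h₂₂ x₂ hx₂ y₂ hy₂))

lemma bianchi_of_codisjoint (hV : Codisjoint V₁ V₂)
    (h₁₁₁ : ∀ x ∈ V₁, ∀ y ∈ V₁, ∀ z ∈ V₁, R x y z + R y z x + R z x y = 0)
    (h₁₁₂ : ∀ x ∈ V₁, ∀ y ∈ V₁, ∀ z ∈ V₂, R x y z + R y z x + R z x y = 0)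
    (h₂₂₁ : ∀ x ∈ V₂, ∀ y ∈ V₂, ∀ z ∈ V₁, R x y z + R y z x + R z x y = 0)
    (h₂₂₂ : ∀ x ∈ V₂, ∀ y ∈ V₂, ∀ z ∈ V₂, R x y z + R y z x + R z x y = 0) (x y z : V) :
    R x y z + R y z x + R z x y = 0 := by
  obtain ⟨x₁, x₂, hx₁, hx₂, rfl⟩ := Submodule.codisjoint_iff_exists_add_eq.1 hV x
  obtain ⟨y₁, y₂, hy₁, hy₂, rfl⟩ := Submodule.codisjoint_iff_exists_add_eq.1 hV y
  obtain ⟨z₁, z₂, hz₁, hz₂, rfl⟩ := Submodule.codisjoint_iff_exists_add_eq.1 hV z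
  simp only [map_add, LinearMap.add_apply]
  linear_combination (norm := module) h₁₁₁ x₁ hx₁ y₁ hy₁ z₁ hz₁ + h₁₁₂ x₁ hx₁ y₁ hy₁ z₂ hz₂ +
    h₁₁₂ y₁ hy₁ z₁ hz₁ x₂ hx₂ + h₁₁₂ z₁ hz₁ x₁ hx₁ y₂ hy₂ + h₂₂₁ x₂ hx₂ y₂ hy₂ z₁ hz₁ +
    h₂₂₁ y₂ hy₂ z₂ hz₂ x₁ hx₁ + h₂₂₁ z₂ hz₂ x₂ hx₂ y₁ hy₁ + h₂₂₂ x₂ hx₂ y₂ hy₂ z₂ hz₂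

lemma IsCurv.apply_eq_zero_of_invariant {g : Set (Module.End ℝ V)} (hR : IsCurv g R)
    (hV : Disjoint V₁ V₂) (hg₁ : Invariant g V₁) (hg₂ : Invariant g V₂) {x y z : V} (hx : x ∈ V₁)
    (hy : y ∈ V₁) (hz : z ∈ V₂) : R x y z = 0 := by
  obtain ⟨-, hRg, bianchi⟩ := hR
  have hxyz : R x y z = -(R y z x + R z x y) :=
    eq_neg_of_add_eq_zero_left (by rw [← add_assoc, bianchi])
  refine Submodule.disjoint_def.1 hV _ ?_ (hg₂ _ (hRg x y) z hz)
  rw [hxyz]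
  exact V₁.neg_mem (V₁.add_mem (hg₁ _ (hRg y z) x hx) (hg₁ _ (hRg z x) y hy))

lemma IsCurv.compl₁₂_projection {B : LinearMap.BilinForm ℝ V} {g : Set (Module.End ℝ V)}
    (hR : IsCurv g R) (hV : IsCompl V₁ V₂) (h : ∀ x ∈ V₁, ∀ y ∈ V₁, R x y ∈ soPart B V₁ V₂) :
    IsCurv (soPart B V₁ V₂) (R.compl₁₂ (V₁.projection V₂ hV) (V₁.projection V₂ hV)) := by
  set P := V₁.projection V₂ hV
  have hP : ∀ x, P x ∈ V₁ := Submodule.projection_apply_mem hV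
  have hRP : ∀ x y z, R (P x) (P y) z = R (P x) (P y) (P z) := by
    intro x y z
    have hz : z - P z ∈ V₂ := by
      rw [← Submodule.projection_apply_eq_zero_iff hV, map_sub,
        Submodule.projection_apply_of_mem_left hV (hP z), sub_self]
    rw [← sub_eq_zero, ← map_sub]
    exact (h _ (hP x) _ (hP y)).2.2 _ hz
  refine ⟨fun x y => hR.1 _ _, fun x y => h _ (hP x) _ (hP y), fun x y z => ?_⟩
  simp only [LinearMap.compl₁₂_apply]
  rw [hRP x y z, hRP y z x, hRP z x y]
  exact hR.2.2 _ _ _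

end Curvature

section ExistsDecomp

variable {B : LinearMap.BilinForm ℝ V} {V₁ V₂ : Submodule ℝ V}
  {R : V →ₗ[ℝ] V →ₗ[ℝ] Module.End ℝ V}

lemma IsCurv.conformalSum_symm (hR : IsCurv (conformalSum B V₁ V₂) R) :
    IsCurv (conformalSum B V₂ V₁) R :=
  conformalSum_comm B V₁ V₂ ▸ hR

lemma IsCurv.apply_mem_soPart (hR : IsCurv (conformalSum B V₁ V₂) R) (hB : B.IsSymm)
    (hV : Disjoint V₁ V₂) {e : V} (heV : e ∈ V₂) (he : B e e ≠ 0) {x y : V} (hx : x ∈ V₁)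
    (hy : y ∈ V₁) : R x y ∈ soPart B V₁ V₂ := by
  have hRV₂ : ∀ z ∈ V₂, R x y z = 0 := fun z hz =>
    hR.apply_eq_zero_of_invariant hV (invariant_conformalSum_left B V₁ V₂)
      (invariant_conformalSum_right B V₁ V₂) hx hy hz
  exact ⟨mem_soSet_of_apply_eq_zero hB (conformalSum_subset_coSet (hR.2.1 x y)) he (hRV₂ e heV),
    invariant_conformalSum_left B V₁ V₂ _ (hR.2.1 x y), hRV₂⟩

lemma IsCurv.exists_mixed_left (hR : IsCurv (conformalSum B V₁ V₂) R) (hB : B.IsSymm)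
    (hV : IsCompl V₁ V₂) (hnd : IsNondegOn B V₁) {e : V} (heV : e ∈ V₁) (he : B e e ≠ 0) :
    ∃ Z : Module.End ℝ V, (∀ y, Z y ∈ V₁) ∧ (∀ x ∈ V₁, Z x = 0) ∧
      ∀ x ∈ V₁, ∀ y ∈ V₂, ∀ u ∈ V₁, R x y u = wedge B (Z y) x u + B (Z y) x • u := by
  have hinv := invariant_conformalSum_left B V₁ V₂
  obtain ⟨hanti, hRg, bianchi⟩ := id hR
  let Φ : V →ₗ[ℝ] V₁ →ₗ[ℝ] Module.End ℝ V₁ :=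
    LinearMap.mk₂ ℝ (fun y x => (R x y).restrict (hinv _ (hRg x y)))
      (fun _ _ _ => by ext; simp) (fun _ _ _ => by ext; simp) (fun _ _ _ => by ext; simp)
      (fun _ _ _ => by ext; simp)
  have hΦ : ∀ y ∈ V₂, Φ y ∈ firstProlong (coSet (B.restrict V₁)) := by
    refine fun y hy => ⟨fun x => restrict_mem_coSet (conformalSum_subset_coSet (hRg x y))
      (hinv _ (hRg x y)),
      fun x u => Subtype.ext ?_⟩
    have hxu := hR.apply_eq_zero_of_invariant hV.disjoint hinv
      (invariant_conformalSum_right B V₁ V₂) x.2 u.2 hy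
    have h := bianchi x u y
    rw [hxu, hanti y x, LinearMap.neg_apply, zero_add, ← sub_eq_add_neg, sub_eq_zero] at h
    exact h.symm
  obtain ⟨ζ, hζ⟩ := exists_firstProlong_coSet_eq (hB.restrict V₁) hnd.separatingLeft_restrict
    (e := ⟨e, heV⟩) he
  refine ⟨V₁.subtype ∘ₗ ζ ∘ₗ Φ ∘ₗ V₂.projection V₁ hV.symm, fun y => Subtype.coe_prop _,
    fun x hx => by simp [Submodule.projection_apply_of_mem_right hV.symm hx],
    fun x hx y hy u hu => ?_⟩
  simp only [LinearMap.comp_apply, Submodule.projection_apply_of_mem_left hV.symm hy]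
  exact congrArg Subtype.val (LinearMap.congr_fun (hζ (Φ y) (hΦ y hy) ⟨x, hx⟩) ⟨u, hu⟩)

lemma adjoint_of_codisjoint (hV : Codisjoint V₁ V₂) (hB : B.IsSymm)
    (horth : ∀ x ∈ V₁, ∀ y ∈ V₂, B x y = 0) {Z W : Module.End ℝ V} (hZ : ∀ y, Z y ∈ V₁)
    (hZ₀ : ∀ x ∈ V₁, Z x = 0) (hW : ∀ x, W x ∈ V₂) (hW₀ : ∀ y ∈ V₂, W y = 0)
    (hZW : ∀ x ∈ V₁, ∀ y ∈ V₂, B (Z y) x = B (W x) y) (x y : V) : B (Z x) y = B x (W y) := by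
  obtain ⟨x₁, x₂, hx₁, hx₂, rfl⟩ := Submodule.codisjoint_iff_exists_add_eq.1 hV x
  obtain ⟨y₁, y₂, hy₁, hy₂, rfl⟩ := Submodule.codisjoint_iff_exists_add_eq.1 hV y
  simp [hZ₀ x₁ hx₁, hW₀ y₂ hy₂, horth _ (hZ x₂) y₂ hy₂, horth x₁ hx₁ _ (hW y₁),
    hZW y₁ hy₁ x₂ hx₂, hB.eq x₂]

lemma IsCurv.exists_mixedCurv (hR : IsCurv (conformalSum B V₁ V₂) R) (hB : B.IsSymm)
    (hV : IsCompl V₁ V₂) (horth : ∀ x ∈ V₁, ∀ y ∈ V₂, B x y = 0) (hnd₁ : IsNondegOn B V₁)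
    (hnd₂ : IsNondegOn B V₂) {e₁ e₂ : V} (heV₁ : e₁ ∈ V₁) (he₁ : B e₁ e₁ ≠ 0) (heV₂ : e₂ ∈ V₂)
    (he₂ : B e₂ e₂ ≠ 0) :
    ∃ Z W : Module.End ℝ V, (∀ y, Z y ∈ V₁) ∧ (∀ x ∈ V₁, Z x = 0) ∧ (∀ x, W x ∈ V₂) ∧
      (∀ y ∈ V₂, W y = 0) ∧ (∀ x y, B (Z x) y = B x (W y)) ∧
      ∀ x ∈ V₁, ∀ y ∈ V₂, R x y = mixedCurv B Z W x y := by
  obtain ⟨Z, hZ, hZ₀, hRZ⟩ := hR.exists_mixed_left hB hV hnd₁ heV₁ he₁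
  obtain ⟨T, hT, hT₀, hRT⟩ := hR.conformalSum_symm.exists_mixed_left hB hV.symm hnd₂ heV₂ he₂
  have hRW : ∀ x ∈ V₁, ∀ y ∈ V₂, ∀ v ∈ V₂,
      R x y v = wedge B ((-T) x) y v + B ((-T) x) y • v := by
    intro x hx y hy v hv
    simp only [hR.1 x y, LinearMap.neg_apply, hRT y hy x hx v hv, wedge_neg_left, map_neg]
    module
  have hW : ∀ x, (-T) x ∈ V₂ := fun x => V₂.neg_mem (hT x)
  have hW₀ : ∀ y ∈ V₂, (-T) y = 0 := fun y hy => by simp [hT₀ y hy]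
  have hZW : ∀ x ∈ V₁, ∀ y ∈ V₂, B (Z y) x = B ((-T) x) y := by
    intro x hx y hy
    obtain ⟨c, hc⟩ := exists_apply_self_of_mem_coSet hB (conformalSum_subset_coSet (hR.2.1 x y))
    have hcZ : B (Z y) x = c := by
      simpa [hRZ x hx y hy e₁ heV₁, he₁,
        apply_self_eq_zero_of_mem_soSet hB (wedge_mem_soSet hB _ _)] using hc e₁
    have hcW : B ((-T) x) y = c := by
      simpa only [hRW x hx y hy e₂ heV₂, map_add, map_smul, LinearMap.add_apply,
        LinearMap.smul_apply, smul_eq_mul, zero_add, mul_eq_mul_right_iff, he₂, or_false,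
        apply_self_eq_zero_of_mem_soSet hB (wedge_mem_soSet hB _ _)] using hc e₂
    rw [hcZ, hcW]
  refine ⟨Z, -T, hZ, hZ₀, hW, hW₀,
    adjoint_of_codisjoint hV.codisjoint hB horth hZ hZ₀ hW hW₀ hZW, fun x hx y hy => ?_⟩
  refine LinearMap.ext_on_codisjoint hV.codisjoint (fun u hu => ?_) (fun v hv => ?_)
  · rw [hRZ x hx y hy u hu, mixedCurv_apply_left hB horth hy (hW x) hu]
  · rw [hRW x hx y hy v hv, mixedCurv_apply_right hB horth hx (hZ y) hv, hZW x hx y hy]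

lemma IsCurv.exists_decomp (hR : IsCurv (conformalSum B V₁ V₂) R) (hB : B.IsSymm)
    (hV : IsCompl V₁ V₂) (horth : ∀ x ∈ V₁, ∀ y ∈ V₂, B x y = 0) (h₁ : V₁ ≠ ⊥) (h₂ : V₂ ≠ ⊥)
    (hnd₁ : IsNondegOn B V₁) (hnd₂ : IsNondegOn B V₂) :
    ∃ R₁ R₂ Z W, Decomp B V₁ V₂ R R₁ R₂ Z W := by
  obtain ⟨e₁, heV₁, he₁⟩ := hnd₁.exists_apply_self_ne_zero hB h₁
  obtain ⟨e₂, heV₂, he₂⟩ := hnd₂.exists_apply_self_ne_zero hB h₂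
  obtain ⟨Z, W, hZ, hZ₀, hW, hW₀, hZW, hRZW⟩ :=
    hR.exists_mixedCurv hB hV horth hnd₁ hnd₂ heV₁ he₁ heV₂ he₂
  have hP₁ {x : V} : x ∈ V₂ → V₁.projection V₂ hV x = 0 :=
    Submodule.projection_apply_of_mem_right hV
  have hP₂ {x : V} : x ∈ V₁ → V₂.projection V₁ hV.symm x = 0 :=
    Submodule.projection_apply_of_mem_right hV.symm
  refine ⟨_, _, Z, W,
    hR.compl₁₂_projection hV fun x hx y hy => hR.apply_mem_soPart hB hV.disjoint heV₂ he₂ hx hy, ?_,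
    hR.compl₁₂_projection hV.symm fun x hx y hy =>
      hR.conformalSum_symm.apply_mem_soPart hB hV.symm.disjoint heV₁ he₁ hx hy, ?_,
    fun y _ => hZ y, hZ₀, fun x _ => hW x, hW₀, hZW, hR.1, fun x hx y hy => ?_,
    fun x hx y hy => ?_, fun x hx y hy => ?_⟩
  · rintro x y (hx | hy)
    · simp [hP₁ hx]
    · simp [hP₁ hy]
  · rintro x y (hx | hy)
    · simp [hP₂ hx]
    · simp [hP₂ hy]
  · simp [hP₂ hx, Submodule.projection_apply_of_mem_left hV hx,
      Submodule.projection_apply_of_mem_left hV hy]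
  · simp [hP₁ hx, Submodule.projection_apply_of_mem_left hV.symm hx,
      Submodule.projection_apply_of_mem_left hV.symm hy]
  · simp [hP₁ hy, hP₂ hx, hRZW x hx y hy, mixedCurv]

end ExistsDecomp

namespace Decomp

variable {B : LinearMap.BilinForm ℝ V} {V₁ V₂ : Submodule ℝ V}
  {R R₁ R₂ R₁' R₂' : V →ₗ[ℝ] V →ₗ[ℝ] Module.End ℝ V} {Z W Z' W' : Module.End ℝ V}

lemma symm (h : Decomp B V₁ V₂ R R₁ R₂ Z W) (hB : B.IsSymm) :
    Decomp B V₂ V₁ R R₂ R₁ (-W) (-Z) := by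
  obtain ⟨hR₁, hR₁₀, hR₂, hR₂₀, hZ, hZ₀, hW, hW₀, hZW, hanti, hR₁₁, hR₂₂, hR₁₂⟩ := h
  refine ⟨hR₂, hR₂₀, hR₁, hR₁₀, fun x hx => V₂.neg_mem (hW x hx), fun y hy => by simp [hW₀ y hy],
    fun y hy => V₁.neg_mem (hZ y hy), fun x hx => by simp [hZ₀ x hx], fun x y => ?_, hanti,
    fun x hx y hy => by rw [hR₂₂ x hx y hy, add_comm],
    fun x hx y hy => by rw [hR₁₁ x hx y hy, add_comm], fun x hx y hy => ?_⟩
  · simp [hB.eq (W x), hB.eq x, hZW]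
  · have hZWxy : B (Z x) y = B (W y) x := (hZW x y).trans (hB.eq x (W y))
    rw [hanti x y, hR₁₂ y hy x hx, hR₁₀ x y (.inl hx), hR₁₀ y x (.inr hx), hR₂₀ x y (.inr hy),
      hR₂₀ y x (.inl hy), hZWxy]
    simp only [LinearMap.neg_apply, wedge_neg_left, map_neg]
    module

lemma apply_left (h : Decomp B V₁ V₂ R R₁ R₂ Z W) {x y : V} (hx : x ∈ V₁) (hy : y ∈ V₁) :
    R x y = R₁ x y := by
  obtain ⟨-, -, -, hR₂₀, -, -, -, -, -, -, hR₁₁, -, -⟩ := h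
  rw [hR₁₁ x hx y hy, hR₂₀ x y (.inl hx), add_zero]

lemma apply_mixed (h : Decomp B V₁ V₂ R R₁ R₂ Z W) {x y : V} (hx : x ∈ V₁) (hy : y ∈ V₂) :
    R x y = mixedCurv B Z W x y := by
  obtain ⟨-, hR₁₀, -, hR₂₀, -, -, -, -, -, -, -, -, hR₁₂⟩ := h
  rw [hR₁₂ x hx y hy, hR₁₀ x y (.inr hy), hR₂₀ x y (.inl hx), zero_add, zero_add, mixedCurv]

lemma bianchi_left_left_left (h : Decomp B V₁ V₂ R R₁ R₂ Z W) {x y z : V} (hx : x ∈ V₁)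
    (hy : y ∈ V₁) (hz : z ∈ V₁) : R x y z + R y z x + R z x y = 0 := by
  rw [h.apply_left hx hy, h.apply_left hy hz, h.apply_left hz hx]
  exact h.1.2.2 x y z

lemma bianchi_left_left_right (h : Decomp B V₁ V₂ R R₁ R₂ Z W) (hB : B.IsSymm)
    (horth : ∀ x ∈ V₁, ∀ y ∈ V₂, B x y = 0) {x y z : V} (hx : x ∈ V₁)
    (hy : y ∈ V₁) (hz : z ∈ V₂) : R x y z + R y z x + R z x y = 0 := by
  obtain ⟨hR₁, -, -, -, -, -, hW, -, -, hanti, -⟩ := id h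
  rw [hanti z x, h.apply_left hx hy, (hR₁.2.1 x y).2.2 z hz, h.apply_mixed hy hz,
    h.apply_mixed hx hz, LinearMap.neg_apply, mixedCurv_apply_left hB horth hz (hW y hy) hx,
    mixedCurv_apply_left hB horth hz (hW x hx) hy, wedge_apply, wedge_apply, hB.eq y x]
  module

lemma isCurv (h : Decomp B V₁ V₂ R R₁ R₂ Z W) (hB : B.IsSymm) (hV : Codisjoint V₁ V₂)
    (horth : ∀ x ∈ V₁, ∀ y ∈ V₂, B x y = 0) : IsCurv (conformalSum B V₁ V₂) R := by
  obtain ⟨hR₁, -, hR₂, -, hZ, -, hW, -, -, hanti, -⟩ := id h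
  refine ⟨hanti, forall_apply_mem_of_codisjoint hV hanti (fun x hx y hy => ?_)
    (fun x hx y hy => ?_) (fun x hx y hy => ?_), bianchi_of_codisjoint hV
    (fun x hx y hy z hz => h.bianchi_left_left_left hx hy hz)
    (fun x hx y hy z hz => h.bianchi_left_left_right hB horth hx hy hz)
    (fun x hx y hy z hz => (h.symm hB).bianchi_left_left_right hB (ortho_symm hB horth) hx hy hz)
    (fun x hx y hy z hz => (h.symm hB).bianchi_left_left_left hx hy hz)⟩
  · rw [h.apply_left hx hy]
    exact soPart_subset_conformalSum (hR₁.2.1 x y)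
  · rw [h.apply_mixed hx hy]
    exact mixedCurv_mem_conformalSum hB horth hx hy (hZ y hy) (hW x hx)
  · rw [(h.symm hB).apply_left hx hy, conformalSum_comm]
    exact soPart_subset_conformalSum (hR₂.2.1 x y)

lemma left_unique (h : Decomp B V₁ V₂ R R₁ R₂ Z W) (h' : Decomp B V₁ V₂ R R₁' R₂' Z' W')
    (hV : Codisjoint V₁ V₂) : R₁ = R₁' := by
  refine LinearMap.ext_on_codisjoint hV (fun x hx => ?_) (fun x hx => ?_)
  · refine LinearMap.ext_on_codisjoint hV (fun y hy => ?_) (fun y hy => ?_)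
    · rw [← h.apply_left hx hy, h'.apply_left hx hy]
    · rw [h.2.1 x y (.inr hy), h'.2.1 x y (.inr hy)]
  · ext1 y
    rw [h.2.1 x y (.inl hx), h'.2.1 x y (.inl hx)]

lemma mixed_unique (h : Decomp B V₁ V₂ R R₁ R₂ Z W) (h' : Decomp B V₁ V₂ R R₁' R₂' Z' W')
    (hB : B.IsSymm) (hV : Codisjoint V₁ V₂) (hnd : IsNondegOn B V₁) {e : V}
    (he : B e e ≠ 0) : Z = Z' := by
  obtain ⟨-, -, -, -, hZ, hZ₀, -⟩ := id h
  obtain ⟨-, -, -, -, hZ', hZ₀', -⟩ := id h'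
  refine LinearMap.ext_on_codisjoint hV (fun x hx => (hZ₀ x hx).trans (hZ₀' x hx).symm)
    (fun y hy => sub_eq_zero.1 (hnd _ (V₁.sub_mem (hZ y hy) (hZ' y hy)) fun x hx => ?_))
  have hxy : B (Z y) x * B e e = B (Z' y) x * B e e := by
    rw [← mixedCurv_apply_self hB Z W, ← mixedCurv_apply_self hB Z' W', ← h.apply_mixed hx hy,
      h'.apply_mixed hx hy]
  rw [map_sub, LinearMap.sub_apply, mul_right_cancel₀ he hxy, sub_self]

end Decomp

theorem curvature_conformal_sum_decomposition_general (B : LinearMap.BilinForm ℝ V)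
    (hB : B.IsSymm) (V₁ V₂ : Submodule ℝ V) (hV : IsCompl V₁ V₂)
    (horth : ∀ x ∈ V₁, ∀ y ∈ V₂, B x y = 0) (h₁ : V₁ ≠ ⊥) (h₂ : V₂ ≠ ⊥)
    (hnd₁ : IsNondegOn B V₁) (hnd₂ : IsNondegOn B V₂)
    (R : V →ₗ[ℝ] V →ₗ[ℝ] Module.End ℝ V) :
    (IsCurv (conformalSum B V₁ V₂) R ↔ ∃ R₁ R₂ Z W, Decomp B V₁ V₂ R R₁ R₂ Z W) ∧
    (∀ R₁ R₂ Z W R₁' R₂' Z' W',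
      Decomp B V₁ V₂ R R₁ R₂ Z W → Decomp B V₁ V₂ R R₁' R₂' Z' W' →
      R₁ = R₁' ∧ R₂ = R₂' ∧ Z = Z') := by
  refine ⟨⟨fun hR => hR.exists_decomp hB hV horth h₁ h₂ hnd₁ hnd₂,
    fun ⟨_, _, _, _, h⟩ => h.isCurv hB hV.codisjoint horth⟩, ?_⟩
  intro R₁ R₂ Z W R₁' R₂' Z' W' h h'
  obtain ⟨e, -, he⟩ := hnd₁.exists_apply_self_ne_zero hB h₁
  exact ⟨h.left_unique h' hV.codisjoint,
    (h.symm hB).left_unique (h'.symm hB) hV.symm.codisjoint,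
    h.mixed_unique h' hB hV.codisjoint hnd₁ he⟩

/-- Let `V = V₁ ⊕ V₂` be a nontrivial orthogonal decomposition of a
pseudo-Euclidean space.  A map `R` is an algebraic curvature tensor of type
`so(V₁) ⊕ so(V₂) ⊕ ℝ·id` if and only if it decomposes as `R₁ + R₂ + R₃` as
above, and the data `(R₁, R₂, Z)` is unique; hence
`ℛ(so(V₁) ⊕ so(V₂) ⊕ ℝ·id) ≅ ℛ(so(V₁)) ⊕ ℛ(so(V₂)) ⊕ V₁⊗V₂`. -/
theorem curvature_conformal_sum_decomposition
    [FiniteDimensional ℝ V] (B : LinearMap.BilinForm ℝ V)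
    (hsymm : ∀ x y, B x y = B y x) (hnd : ∀ x, (∀ y, B x y = 0) → x = 0)
    (V₁ V₂ : Submodule ℝ V) (hcompl : IsCompl V₁ V₂)
    (horth : ∀ x ∈ V₁, ∀ y ∈ V₂, B x y = 0)
    (h1 : V₁ ≠ ⊥) (h2 : V₂ ≠ ⊥)
    (hnd1 : IsNondegOn B V₁) (hnd2 : IsNondegOn B V₂)
    (R : V →ₗ[ℝ] V →ₗ[ℝ] Module.End ℝ V) :
    (IsCurv
        {F | ∃ c : ℝ, ∃ A₁ ∈ soPart B V₁ V₂, ∃ A₂ ∈ soPart B V₂ V₁,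
          F = c • (1 : Module.End ℝ V) + A₁ + A₂} R ↔
      ∃ R₁ R₂ Z W, Decomp B V₁ V₂ R R₁ R₂ Z W) ∧
    (∀ R₁ R₂ Z W R₁' R₂' Z' W',
      Decomp B V₁ V₂ R R₁ R₂ Z W → Decomp B V₁ V₂ R R₁' R₂' Z' W' →
      R₁ = R₁' ∧ R₂ = R₂' ∧ Z = Z') := by
  exact curvature_conformal_sum_decomposition_general B ⟨hsymm⟩ V₁ V₂ hcompl horth h1 h2 hnd1 hnd2 R

end Weyl
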